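/- arXiv:1601.03659 — 2 statements merged into one kernel-verified Lean document; each statement's English description precedes it below -/
import Mathlib

section
/- Every family of subsets of [n] that is union-free (contains no three distinct sets A, B, C with A ∪ B = C) has size at most 2√2 · C(n, ⌊n/2⌋). -/
/-!
Split the ground set as `X ⊔ Y` with `|X| = a`, `|Y| = b`, and view a member of the family as a
pair `(A, B)` with `A ⊆ X`, `B ⊆ Y`. If some `(A', B)` with `A' ⊊ A` and some `(A, B')` with
`B' ⊊ B` were both in the family, their union would be `(A, B)`. Hence in each member `(A, B)`
either `A` is minimal among the first components occurring with `B`, or `B` is minimal among the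
second components occurring with `A`. Minimal elements form antichains, so Sperner's theorem bounds
the family by `2 ^ b * C(a, ⌊a/2⌋) + 2 ^ a * C(b, ⌊b/2⌋)`.

Take `a = ⌊n/2⌋` and `b = ⌈n/2⌉`. With `w k = C(2k, k) / 4 ^ k`, all the binomial coefficients
involved become values of `w`, and the bound follows from the fact that `w k ^ 2 * (4 k + 1)` is
increasing in `k`, compared at `k` and `2 k`. The only exception is `n = 1`, where the power set
has just two elements.
-/

/-- A family of subsets of `[n]` is union-free if it contains no three distinct
sets `A, B, C` with `A ∪ B = C`. -/
def UnionFree {n : ℕ} (F : Finset (Finset (Fin n))) : Prop :=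
  ∀ A ∈ F, ∀ B ∈ F, ∀ C ∈ F, A ≠ B → A ≠ C → B ≠ C → A ∪ B ≠ C

/-! ### The bound from Sperner's theorem -/

/-- If every section of `H` at a fixed second component is an antichain, Sperner's theorem bounds
each of the `2 ^ |β|` sections. -/
lemma card_le_of_sections_antichain {α β : Type*} [Fintype α] [Fintype β] [DecidableEq α]
    [DecidableEq β] (H : Finset (Finset α × Finset β))
    (hH : ∀ p ∈ H, ∀ q ∈ H, p.2 = q.2 → p.1 ⊆ q.1 → p.1 = q.1) :
    H.card ≤ 2 ^ Fintype.card β * (Fintype.card α).choose (Fintype.card α / 2) := by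
  rw [Finset.card_eq_sum_card_fiberwise (f := Prod.snd) (t := Finset.univ) (by simp)]
  have key : ∀ B ∈ (Finset.univ : Finset (Finset β)),
      (H.filter (fun p => p.2 = B)).card ≤ (Fintype.card α).choose (Fintype.card α / 2) := by
    intro B _
    rw [← Finset.card_image_of_injOn (f := Prod.fst) (s := H.filter (fun p => p.2 = B))]
    · apply IsAntichain.sperner
      intro A hA A' hA' hne hle
      simp only [Finset.coe_image, Finset.coe_filter, Set.mem_image, Set.mem_ofPred_eq] at hA hA'
      obtain ⟨p, ⟨hp, hpB⟩, rfl⟩ := hA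
      obtain ⟨q, ⟨hq, hqB⟩, rfl⟩ := hA'
      exact hne (hH p hp q hq (hpB.trans hqB.symm) hle)
    · intro p hp q hq h
      simp only [Finset.coe_filter, Set.mem_ofPred_eq] at hp hq
      exact Prod.ext h (hp.2.trans hq.2.symm)
  refine (Finset.sum_le_card_nsmul _ _ _ key).trans ?_
  simp

lemma card_le_of_pairs {α β : Type*} [Fintype α] [Fintype β] [DecidableEq α]
    [DecidableEq β] (G : Finset (Finset α × Finset β))
    (hG : ∀ p ∈ G, ∀ q ∈ G, ∀ r ∈ G, p ≠ q → p ≠ r → q ≠ r → p ⊔ q ≠ r) :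
    G.card ≤ 2 ^ Fintype.card β * (Fintype.card α).choose (Fintype.card α / 2)
      + 2 ^ Fintype.card α * (Fintype.card β).choose (Fintype.card β / 2) := by
  classical
  set G₁ := G.filter (fun p => ∀ q ∈ G, q.2 = p.2 → q.1 ⊆ p.1 → q.1 = p.1) with hG₁
  set G₂ := G.filter (fun p => ∀ q ∈ G, q.1 = p.1 → q.2 ⊆ p.2 → q.2 = p.2) with hG₂
  have hsub : G ⊆ G₁ ∪ G₂ := by
    intro r hr
    by_contra hcon
    simp only [hG₁, hG₂, Finset.mem_union, Finset.mem_filter, hr, true_and, not_or] at hcon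
    push Not at hcon
    obtain ⟨⟨p, hp, hp2, hp1, hpne⟩, ⟨q, hq, hq1, hq2, hqne⟩⟩ := hcon
    refine hG p hp q hq r hr ?_ ?_ ?_ ?_
    · rintro rfl; exact hpne hq1
    · rintro rfl; exact hpne rfl
    · rintro rfl; exact hqne rfl
    · apply Prod.ext
      · rw [Prod.fst_sup, hq1]; exact sup_eq_right.2 hp1
      · rw [Prod.snd_sup, hp2]; exact sup_eq_left.2 hq2
  have h1 := card_le_of_sections_antichain G₁ (by
    intro p hp q hq h h'
    exact (Finset.mem_filter.1 hq).2 p (Finset.mem_filter.1 hp).1 h h')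
  have h2 := card_le_of_sections_antichain (G₂.image Prod.swap) (by
    simp only [Finset.mem_image]
    rintro _ ⟨p, hp, rfl⟩ _ ⟨q, hq, rfl⟩ h h'
    exact (Finset.mem_filter.1 hq).2 p (Finset.mem_filter.1 hp).1 h h')
  rw [Finset.card_image_of_injective _ Prod.swap_injective] at h2
  exact (Finset.card_le_card hsub).trans ((Finset.card_union_le _ _).trans (add_le_add h1 h2))

lemma UnionFree.card_le_split {n : ℕ} {F : Finset (Finset (Fin n))} (hF : UnionFree F)
    (a b : ℕ) (hab : n = a + b) :
    F.card ≤ 2 ^ b * a.choose (a / 2) + 2 ^ a * b.choose (b / 2) := by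
  subst hab
  let e : Finset (Fin (a + b)) ≃o Finset (Fin a) × Finset (Fin b) :=
    ({ finSumFinEquiv.symm.finsetCongr with
      map_rel_iff' := Finset.map_subset_map } :
      Finset (Fin (a + b)) ≃o Finset (Fin a ⊕ Fin b)).trans Finset.sumEquiv
  have h := card_le_of_pairs (F.map e.toEquiv.toEmbedding) (by
    simp only [Finset.mem_map]
    rintro _ ⟨A, hA, rfl⟩ _ ⟨B, hB, rfl⟩ _ ⟨C, hC, rfl⟩ hAB hAC hBC h
    refine hF A hA B hB C hC (fun h => hAB (h ▸ rfl)) (fun h => hAC (h ▸ rfl))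
      (fun h => hBC (h ▸ rfl)) (e.injective ?_)
    exact (e.map_sup A B).trans h)
  simpa using h

/-! ### Estimates on central binomial coefficients -/

/-- The normalized central binomial coefficient `C(2k, k) / 4 ^ k`. -/
noncomputable def cbRatio (k : ℕ) : ℝ := (k.centralBinom : ℝ) / 4 ^ k

lemma cbRatio_pos (k : ℕ) : 0 < cbRatio k := by
  have := Nat.centralBinom_pos k
  unfold cbRatio
  positivity

lemma cbRatio_succ (k : ℕ) : cbRatio (k + 1) = cbRatio k * ((2 * k + 1) / (2 * k + 2)) := by
  have h : ((k : ℝ) + 1) * (k + 1).centralBinom = 2 * (2 * k + 1) * k.centralBinom := by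
    exact_mod_cast Nat.succ_mul_centralBinom_succ k
  unfold cbRatio
  rw [pow_succ]
  field_simp
  linarith

lemma cbRatio_succ_le (k : ℕ) : cbRatio (k + 1) ≤ cbRatio k := by
  rw [cbRatio_succ]
  refine mul_le_of_le_one_right (cbRatio_pos k).le ?_
  rw [div_le_one (by positivity)]
  linarith

lemma cbRatio_sq_monotone : Monotone fun k : ℕ => cbRatio k ^ 2 * (4 * (k : ℝ) + 1) := by
  refine monotone_nat_of_le_succ fun k => ?_
  rw [cbRatio_succ, mul_pow, mul_assoc]
  refine mul_le_mul_of_nonneg_left ?_ (by positivity)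
  push_cast
  rw [div_pow, div_mul_eq_mul_div, le_div_iff₀ (by positivity)]
  have : (0 : ℝ) ≤ k := k.cast_nonneg
  nlinarith

lemma cbRatio_sq_le (k : ℕ) :
    cbRatio k ^ 2 * (4 * (k : ℝ) + 1) ≤ cbRatio (2 * k) ^ 2 * (8 * (k : ℝ) + 1) := by
  have h := cbRatio_sq_monotone (show k ≤ 2 * k by omega)
  simp only at h
  push_cast at h
  linarith

lemma le_sqrt_two_mul {x y : ℝ} (hy : 0 ≤ y) (h : x ^ 2 ≤ 2 * y ^ 2) : x ≤ Real.sqrt 2 * y := by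
  refine le_of_sq_le_sq ?_ (by positivity)
  rw [mul_pow, Real.sq_sqrt (by norm_num)]
  exact h

lemma cbRatio_le_sqrt_two_mul (k : ℕ) : cbRatio k ≤ Real.sqrt 2 * cbRatio (2 * k) := by
  refine le_sqrt_two_mul (cbRatio_pos _).le ?_
  have h := cbRatio_sq_le k
  have : (0 : ℝ) ≤ k := k.cast_nonneg
  have h2 := sq_nonneg (cbRatio (2 * k))
  have h3 : (0 : ℝ) < 4 * k + 1 := by positivity
  refine le_of_mul_le_mul_right (h.trans ?_) h3
  nlinarith

/-- The estimate for `n = 4 k + 1`. It is false for `k = 0`, and it is tight enough that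
monotonicity of `cbRatio k ^ 2 * k` alone would not give it. -/
lemma cbRatio_add_le (k : ℕ) (hk : 1 ≤ k) :
    cbRatio k + cbRatio (k + 1) ≤ Real.sqrt 2 * (2 * cbRatio (2 * k + 1)) := by
  refine le_sqrt_two_mul (mul_nonneg zero_le_two (cbRatio_pos _).le) ?_
  obtain ⟨j, rfl⟩ := Nat.exists_eq_add_of_le' hk
  have h := cbRatio_sq_le (j + 1)
  rw [cbRatio_succ (j + 1), cbRatio_succ (2 * (j + 1))]
  generalize cbRatio (j + 1) = u at h ⊢
  generalize cbRatio (2 * (j + 1)) = v at h ⊢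
  push_cast at h ⊢
  have hj : (0 : ℝ) ≤ j := j.cast_nonneg
  generalize (j : ℝ) = x at h hj ⊢
  have hu : u ^ 2 ≤ v ^ 2 * ((8 * (x + 1) + 1) / (4 * (x + 1) + 1)) := by
    rw [mul_div_assoc', le_div_iff₀ (by positivity)]
    exact h
  have hL : (u + u * ((2 * (x + 1) + 1) / (2 * (x + 1) + 2))) ^ 2
      = u ^ 2 * ((4 * x + 7) / (2 * x + 4)) ^ 2 := by
    field_simp
    ring
  rw [hL]
  refine (mul_le_mul_of_nonneg_right hu (by positivity)).trans ?_
  have hR : 2 * (2 * (v * ((2 * (2 * (x + 1)) + 1) / (2 * (2 * (x + 1)) + 2)))) ^ 2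
      = v ^ 2 * (8 * ((4 * x + 5) / (4 * x + 6)) ^ 2) := by
    field_simp
    ring
  rw [hR, mul_assoc]
  refine mul_le_mul_of_nonneg_left ?_ (sq_nonneg v)
  rw [div_pow, div_pow, div_mul_div_comm, mul_div_assoc', div_le_div_iff₀ (by positivity)
    (by positivity), ← sub_nonneg]
  ring_nf
  positivity

lemma choose_two_mul_eq (k : ℕ) : ((2 * k).choose k : ℝ) = 4 ^ k * cbRatio k := by
  rw [← Nat.centralBinom_eq_two_mul_choose, cbRatio]
  field_simp

lemma choose_two_mul_add_one_eq (k : ℕ) :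
    ((2 * k + 1).choose k : ℝ) = 2 * 4 ^ k * cbRatio (k + 1) := by
  have h : 2 * (2 * k + 1).choose k = (2 * (k + 1)).choose (k + 1) := by
    rw [show 2 * (k + 1) = (2 * k + 1) + 1 by ring, Nat.choose_succ_succ, Nat.choose_symm_half]
    ring
  have h' : 2 * ((2 * k + 1).choose k : ℝ) = (2 * (k + 1)).choose (k + 1) := by exact_mod_cast h
  rw [choose_two_mul_eq, pow_succ] at h'
  linarith

/-! ### The four residues modulo 4 -/

/-- Every union-free family of subsets of `[n]` has size at most
`2√2 · C(n, ⌊n/2⌋)`. -/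
theorem unionFree_card_le (n : ℕ) (hn : 0 < n) (F : Finset (Finset (Fin n)))
    (hF : UnionFree F) :
    (F.card : ℝ) ≤ 2 * Real.sqrt 2 * (n.choose (n / 2)) := by
  have hpow : ∀ k : ℕ, (2 : ℝ) ^ (2 * k) = 4 ^ k := fun k => by rw [pow_mul]; norm_num
  have hpow4 : ∀ k : ℕ, (4 : ℝ) ^ (2 * k) = 4 ^ k * 4 ^ k := fun k => by rw [two_mul, pow_add]
  have hchoose : ∀ m j : ℕ, n = m → m / 2 = j → n.choose (n / 2) = m.choose j := by
    rintro m j rfl rfl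
    rfl
  have hsplit : ∀ a b : ℕ, n = a + b →
      (F.card : ℝ) ≤ 2 ^ b * a.choose (a / 2) + 2 ^ a * b.choose (b / 2) := fun a b hab => by
    exact_mod_cast hF.card_le_split a b hab
  obtain ⟨k, hk⟩ : ∃ k, n = 4 * k ∨ n = 4 * k + 1 ∨ n = 4 * k + 2 ∨ n = 4 * k + 3 :=
    ⟨n / 4, by omega⟩
  have hc : (0 : ℝ) < 4 ^ k * 4 ^ k := by positivity
  rcases hk with hk | hk | hk | hk
  · have h := hsplit (2 * k) (2 * k) (by omega)
    rw [show 2 * k / 2 = k by omega, hpow, choose_two_mul_eq] at h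
    rw [hchoose (2 * (2 * k)) (2 * k) (by omega) (by omega), choose_two_mul_eq, hpow4]
    have := mul_le_mul_of_nonneg_left (cbRatio_le_sqrt_two_mul k) hc.le
    linarith
  · rcases Nat.eq_zero_or_pos k with rfl | hk0
    · obtain rfl : n = 1 := by omega
      have h : F.card ≤ 2 := F.card_le_univ.trans (by simp)
      have h' : (F.card : ℝ) ≤ 2 := by exact_mod_cast h
      have h2 : (1 : ℝ) ≤ Real.sqrt 2 := Real.one_le_sqrt.2 (by norm_num)
      norm_num
      linarith
    have h := hsplit (2 * k) (2 * k + 1) (by omega)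
    rw [show 2 * k / 2 = k by omega, show (2 * k + 1) / 2 = k by omega, pow_succ, hpow,
      choose_two_mul_eq, choose_two_mul_add_one_eq] at h
    rw [hchoose (2 * (2 * k) + 1) (2 * k) (by omega) (by omega),
      choose_two_mul_add_one_eq, hpow4]
    have := mul_le_mul_of_nonneg_left (cbRatio_add_le k hk0) hc.le
    linarith
  · have h := hsplit (2 * k + 1) (2 * k + 1) (by omega)
    rw [show (2 * k + 1) / 2 = k by omega, pow_succ, hpow, choose_two_mul_add_one_eq] at h
    rw [hchoose (2 * (2 * k + 1)) (2 * k + 1) (by omega) (by omega), choose_two_mul_eq,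
      pow_succ, hpow4]
    have h1 : cbRatio (k + 1) ≤ Real.sqrt 2 * cbRatio (2 * k + 1) :=
      (cbRatio_le_sqrt_two_mul (k + 1)).trans
        (mul_le_mul_of_nonneg_left (cbRatio_succ_le (2 * k + 1)) (Real.sqrt_nonneg 2))
    have := mul_le_mul_of_nonneg_left h1 hc.le
    linarith
  · have h := hsplit (2 * k + 1) (2 * (k + 1)) (by omega)
    rw [show (2 * k + 1) / 2 = k by omega, show 2 * (k + 1) / 2 = k + 1 by omega, hpow, pow_succ,
      pow_succ, hpow, choose_two_mul_eq, choose_two_mul_add_one_eq, pow_succ] at h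
    rw [hchoose (2 * (2 * k + 1) + 1) (2 * k + 1) (by omega) (by omega),
      choose_two_mul_add_one_eq, pow_succ, hpow4]
    have := mul_le_mul_of_nonneg_left (cbRatio_le_sqrt_two_mul (k + 1)) hc.le
    rw [show 2 * (k + 1) = 2 * k + 1 + 1 by ring] at this
    linarith
end

section
/- The number α(n) of union-free families of subsets of [n] satisfies α(n) = 2^{(1+o(1))·C(n,⌊n/2⌋)}; i.e., for every ε > 0 and n sufficiently large, 2^{C(n,⌊n/2⌋)} ≤ α(n) ≤ 2^{(1+ε)·C(n,⌊n/2⌋)}. -/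
/-- The number of union-free families of subsets of `[n]`. -/
noncomputable def alphaUF (n : ℕ) : ℕ :=
  Nat.card {F : Finset (Finset (Fin n)) // UnionFree F}

/-!
The lower bound counts the subfamilies of the middle layer, all of which are union-free.

The upper bound is a container argument. Fix a family `V` of subsets of `[n]`, a member `C` of `V`
and disjoint `W, W' ⊆ C`. If `C` belongs to a union-free `F`, then `F` cannot contain both a proper
subset `A` of `C` with `C \ A ⊆ W` and a proper subset `B` of `C` with `C \ B ⊆ W'`, since
`A ∪ B = C` for such sets. So, if at least `d` members of `V` are of the first kind and at least
`d` of the second, a union-free `F ⊆ V` either omits `C`, or contains `C` and avoids one of two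
sets of at least `d` members of `V`. The number of union-free subfamilies thus obeys
`g(v) ≤ g(v - 1) + 2 g(v - 1 - d)`, which gives at most `2 ^ M * (1 + x) ^ #V` of them if such a `C`
exists whenever `#V > M` and if `2 ≤ x (1 + x) ^ d` (`countUF_le`). With `N = C(n, ⌊n/2⌋)`, it is
enough to have `d` linear in `n` for `M = (1 + ε/2) N`: one takes `x` to be a small multiple of
`1 / √n`, and `2 ^ n = O(√n N)` makes `(1 + x) ^ (2 ^ n)` negligible.

Such a `C` is found by a random chain argument (`card_le_of_light`). By Chebyshev's inequality `V`
may be assumed to live on layers within `w / 2` of `n / 2`, where `w ≈ n / (4k)` and `k` is a large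
constant. In a random maximal chain at most one member of `V` is the lowest one, so, as in the LYM
inequality, it suffices to show that a chain going down from `C` hits `V` again with probability at
most `2 / k` if `C` has no two disjoint heavy directions (`card_hits_le`). A hit happens within
`w - 1` steps. Cut the top `k w` positions below `C` into `k` blocks of length `w`; by symmetry the
first block may be replaced by any other one, rotated cyclically by any amount. At most one
block is heavy. In a light block, distinct rotations producing a hit produce distinct members of
`V` below `C`, so at most `w / k` of the `w` rotations produce one (`card_rot_hits_le`).
-/

open Finset Numbering

/-- The members of `V` that are proper subsets of `C` and obtained from `C` by deleting
elements of `W` only. -/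
def downIn {X : Type*} [DecidableEq X] (V : Finset (Finset X)) (C W : Finset X) :
    Finset (Finset X) :=
  {A ∈ V | A ⊆ C ∧ A ≠ C ∧ C \ A ⊆ W}

/-- The set of the first `j` elements in the numbering `f`. -/
def firstElems {X : Type*} [Fintype X] (f : Numbering X) (j : ℕ) : Finset X :=
  {x | (f x : ℕ) < j}

/-- The chain of initial segments of `f`, followed downwards from its member of size `m`,
meets `V` after between `1` and `w - 1` steps. -/
def Hits {X : Type*} [Fintype X] (V : Finset (Finset X)) (f : Numbering X) (m w : ℕ) : Prop :=
  ∃ s, 1 ≤ s ∧ s < w ∧ firstElems f (m - s) ∈ V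

/-! ### Random chains -/

section Chains

lemma mem_firstElems {X : Type*} [Fintype X] {f : Numbering X} {j : ℕ} {x : X} :
    x ∈ firstElems f j ↔ (f x : ℕ) < j := by
  simp [firstElems]

variable {X : Type*} [Fintype X]

lemma firstElems_card_of_isPrefix {f : Numbering X} {C : Finset X} (h : IsPrefix f C) :
    firstElems f #C = C := by
  ext x; simp [mem_firstElems, h x]

variable [DecidableEq X]

/-- `k` disjoint blocks of `w` consecutive positions, counted downwards from position `m - 1`. -/
def blockPos {N k w m : ℕ} (hm : m ≤ N) (hkw : k * w ≤ m) : Fin k × Fin w ↪ Fin N where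
  toFun p := ⟨m - 1 - (finProdFinEquiv p : ℕ), by
    have := (finProdFinEquiv p).2; omega⟩
  inj' p q h := by
    have hp := (finProdFinEquiv p).2
    have hq := (finProdFinEquiv q).2
    apply finProdFinEquiv.injective
    ext
    simp only [Fin.mk.injEq] at h
    omega

lemma blockPos_val {N k w m : ℕ} (hm : m ≤ N) (hkw : k * w ≤ m) (p : Fin k × Fin w) :
    (blockPos hm hkw p : ℕ) = m - 1 - (finProdFinEquiv p : ℕ) := rfl

lemma blockPos_lt {N k w m : ℕ} (hm : m ≤ N) (hkw : k * w ≤ m) (p : Fin k × Fin w) :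
    (blockPos hm hkw p : ℕ) < m := by
  have hp := (finProdFinEquiv p).2
  rw [blockPos_val]
  omega

lemma blockPos_zero {N k w m : ℕ} [NeZero k] [NeZero w] (hm : m ≤ N) (hkw : k * w ≤ m)
    (y : Fin w) : (blockPos hm hkw (0, y) : ℕ) = m - 1 - y := by
  simp [blockPos_val]

/-- For `p = (i, r)`, the permutation of the positions that shifts the blocks cyclically by `i`,
rotates each of them cyclically by `r`, and fixes all positions outside the blocks. -/
def blockRot {N k w m : ℕ} [NeZero k] [NeZero w] (hm : m ≤ N) (hkw : k * w ≤ m)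
    (p : Fin k × Fin w) : Equiv.Perm (Fin N) :=
  (Equiv.addLeft p).viaFintypeEmbedding (blockPos hm hkw)

lemma blockRot_blockPos {N k w m : ℕ} [NeZero k] [NeZero w] (hm : m ≤ N) (hkw : k * w ≤ m)
    (p q : Fin k × Fin w) :
    blockRot hm hkw p (blockPos hm hkw q) = blockPos hm hkw (p + q) := by
  simp [blockRot, Equiv.Perm.viaFintypeEmbedding_apply_image]

lemma blockRot_lt {N k w m : ℕ} [NeZero k] [NeZero w] (hm : m ≤ N) (hkw : k * w ≤ m)
    (p : Fin k × Fin w) (q : Fin N) : (blockRot hm hkw p q : ℕ) < m ↔ (q : ℕ) < m := by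
  by_cases h : q ∈ Set.range (blockPos hm hkw)
  · obtain ⟨a, rfl⟩ := h
    rw [blockRot_blockPos]
    simp [blockPos_lt]
  · rw [blockRot, Equiv.Perm.viaFintypeEmbedding_apply_notMem_range _ _ h]

/-- An arc of length at most `w - 1` on a cycle of length `w` determines its starting point. -/
lemma arc_start_unique {w : ℕ} [NeZero w] {r r' : Fin w} {s s' : ℕ} (hs' : 1 ≤ s')
    (hsw' : s' < w) (h : ∀ z : Fin w, (∃ y : Fin w, (y : ℕ) < s ∧ z = r + y) ↔
      ∃ y : Fin w, (y : ℕ) < s' ∧ z = r' + y) : r = r' := by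
  obtain ⟨x, hx, hrx⟩ := (h r').2 ⟨0, by rw [Fin.val_zero]; omega, by simp⟩
  by_cases hx0 : x = 0
  · simp [hrx, hx0]
  exfalso
  have hw1 : 1 < w := by omega
  obtain ⟨y, hy, hry⟩ := (h (r' - 1)).1 ⟨x - 1, by
    have : ((x - 1 : Fin w) : ℕ) ≤ x := by
      rw [Fin.val_sub_one_of_ne_zero hx0]
      exact Nat.sub_le _ _
    omega, by rw [hrx]; abel⟩
  have hy1 : y + 1 = 0 := by
    have : r' + (y + 1) = r' + 0 := by rw [← add_assoc, ← hry]; abel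
    exact add_left_cancel this
  have := congrArg Fin.val hy1
  rw [Fin.val_add] at this
  simp only [Fin.val_zero] at this
  have h1 : ((1 : Fin w) : ℕ) = 1 := by
    rw [Fin.val_one', Nat.mod_eq_of_lt hw1]
  rw [h1, Nat.mod_eq_of_lt (by omega)] at this
  omega

/-- Elements occupying the `i`-th block of positions below `#C`. -/
def blockSet {k w : ℕ} (f : Numbering X) (C : Finset X) (hkw : k * w ≤ #C) (i : Fin k) :
    Finset X :=
  {x | ∃ y : Fin w, f x = blockPos C.card_le_univ hkw (i, y)}

lemma mem_firstElems_rot {k w : ℕ} [NeZero k] [NeZero w] {f : Numbering X} {C : Finset X}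
    (hkw : k * w ≤ #C) (hf : IsPrefix f C) (i : Fin k) (r : Fin w) {s : ℕ} (hs : s < w) (x : X) :
    x ∈ C \ firstElems (f.trans (blockRot C.card_le_univ hkw (i, r)).symm) (#C - s) ↔
      ∃ y : Fin w, (y : ℕ) < s ∧ f x = blockPos C.card_le_univ hkw (i, r + y) := by
  set g := blockRot C.card_le_univ hkw (i, r) with hg
  have hwm : w ≤ #C := le_trans (Nat.le_mul_of_pos_left w (NeZero.pos k)) hkw
  have key : ((g.symm (f x) : ℕ) < #C) ↔ x ∈ C := by
    rw [hf x, ← blockRot_lt C.card_le_univ hkw (i, r) (g.symm (f x)), ← hg, Equiv.apply_symm_apply]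
  simp only [mem_sdiff, mem_firstElems, Equiv.trans_apply, ← key]
  constructor
  · rintro ⟨h1, h2⟩
    refine ⟨⟨#C - 1 - (g.symm (f x) : ℕ), by omega⟩, by simp only; omega, ?_⟩
    have := blockRot_blockPos C.card_le_univ hkw (i, r) (0, ⟨#C - 1 - (g.symm (f x) : ℕ), by omega⟩)
    simp only [Prod.mk_add_mk, add_zero] at this
    rw [← this, ← hg, ← Equiv.symm_apply_eq]
    ext
    rw [blockPos_zero]
    simp only
    omega
  · rintro ⟨y, hy, hxy⟩
    have := blockRot_blockPos C.card_le_univ hkw (i, r) (0, y)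
    simp only [Prod.mk_add_mk, add_zero] at this
    rw [← this, ← hg, ← Equiv.symm_apply_eq] at hxy
    rw [hxy, blockPos_zero]
    omega

/-- Among the `w` rotations of the `i`-th block, at most `#(downIn V C W)` give a chain that meets
`V`, where `W` is the set of elements of that block: a hit at `A` is determined by the arc `C \ A`,
which determines the rotation. -/
lemma card_rot_hits_le {k w : ℕ} [NeZero k] [NeZero w] (V : Finset (Finset X)) {f : Numbering X}
    {C : Finset X} (hkw : k * w ≤ #C) (hf : IsPrefix f C) (i : Fin k)
    [DecidablePred fun r : Fin w =>
      Hits V (f.trans (blockRot C.card_le_univ hkw (i, r)).symm) #C w] :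
    #{r : Fin w | Hits V (f.trans (blockRot C.card_le_univ hkw (i, r)).symm) #C w} ≤
      #(downIn V C (blockSet f C hkw i)) := by
  have hex : ∀ r : Fin w, ∃ s,
      Hits V (f.trans (blockRot C.card_le_univ hkw (i, r)).symm) #C w →
      1 ≤ s ∧ s < w ∧
        firstElems (f.trans (blockRot C.card_le_univ hkw (i, r)).symm) (#C - s) ∈ V := by
    intro r
    by_cases h : Hits V (f.trans (blockRot C.card_le_univ hkw (i, r)).symm) #C w
    · obtain ⟨s, hs⟩ := h
      exact ⟨s, fun _ => hs⟩
    · exact ⟨0, fun h' => absurd h' h⟩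
  choose s hs using hex
  refine card_le_card_of_injOn
    (fun r => firstElems (f.trans (blockRot C.card_le_univ hkw (i, r)).symm) (#C - s r)) ?_ ?_
  · intro r hr
    obtain ⟨h1, h2, h3⟩ := hs r (by simpa using hr)
    have hm := fun x => mem_firstElems_rot hkw hf i r h2 x
    simp only [downIn, mem_coe, mem_filter]
    refine ⟨h3, ?_, ?_, ?_⟩
    · intro x hx
      rw [hf x, ← Equiv.apply_symm_apply (blockRot C.card_le_univ hkw (i, r)) (f x), blockRot_lt]
      rw [mem_firstElems, Equiv.trans_apply] at hx
      omega
    · intro hC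
      have := (hm (f.symm (blockPos C.card_le_univ hkw (i, r)))).2 ⟨0, by rw [Fin.val_zero]; omega, by simp⟩
      rw [hC] at this
      simp at this
    · intro x hx
      obtain ⟨y, -, hy⟩ := (hm x).1 hx
      simp only [blockSet, mem_filter, mem_univ, true_and]
      exact ⟨_, hy⟩
  · intro r hr r' hr' h
    obtain ⟨h1, h2, -⟩ := hs r (by simpa using hr)
    obtain ⟨h1', h2', -⟩ := hs r' (by simpa using hr')
    refine arc_start_unique (s := s r) h1' h2' fun z => ?_
    have e1 := mem_firstElems_rot hkw hf i r h2 (f.symm (blockPos C.card_le_univ hkw (i, z)))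
    have e2 := mem_firstElems_rot hkw hf i r' h2' (f.symm (blockPos C.card_le_univ hkw (i, z)))
    simp only at h
    rw [h, e2] at e1
    simpa using e1.symm

open Classical in
/-- If no two disjoint subsets of `C` are both heavy, then few of the numberings starting with `C`
hit `V` just below `C`. -/
lemma card_hits_le {k w d : ℕ} (hk : 0 < k) (hw : 0 < w) (V : Finset (Finset X)) {C : Finset X}
    (hkw : k * w ≤ #C)
    (hlight : ∀ W W', W ⊆ C → W' ⊆ C → Disjoint W W' →
      #(downIn V C W) ≤ d ∨ #(downIn V C W') ≤ d) :
    k * w * #{f ∈ prefixed C | Hits V f #C w} ≤ (w + k * d) * #(prefixed C) := by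
  have : NeZero k := ⟨hk.ne'⟩
  have : NeZero w := ⟨hw.ne'⟩
  let rot (p : Fin k × Fin w) := blockRot C.card_le_univ hkw p
  have hpre : ∀ p f, f ∈ prefixed C ↔ f.trans (rot p) ∈ prefixed C := by
    intro p f
    simp only [mem_prefixed, IsPrefix, Equiv.trans_apply, rot, blockRot_lt]
  -- each rotation permutes the numberings starting with `C`
  have hsame : ∀ p : Fin k × Fin w, #{f ∈ prefixed C | Hits V f #C w} =
      #{f ∈ prefixed C | Hits V (f.trans (rot p).symm) #C w} := by
    intro p
    refine card_bij' (fun f _ => f.trans (rot p)) (fun f _ => f.trans (rot p).symm) ?_ ?_ ?_ ?_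
    · intro f hf
      rw [mem_filter] at hf ⊢
      refine ⟨(hpre p f).1 hf.1, ?_⟩
      rw [Equiv.trans_assoc, Equiv.self_trans_symm, Equiv.trans_refl]
      exact hf.2
    · intro f hf
      rw [mem_filter] at hf ⊢
      refine ⟨(hpre p _).2 ?_, hf.2⟩
      rw [Equiv.trans_assoc, Equiv.symm_trans_self, Equiv.trans_refl]
      exact hf.1
    · intro f _
      rw [Equiv.trans_assoc, Equiv.self_trans_symm, Equiv.trans_refl]
    · intro f _
      rw [Equiv.trans_assoc, Equiv.symm_trans_self, Equiv.trans_refl]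
  have hone : ∀ f ∈ prefixed C,
      #{p : Fin k × Fin w | Hits V (f.trans (rot p).symm) #C w} ≤ w + k * d := by
    intro f hf
    rw [mem_prefixed] at hf
    have hsub : ∀ i : Fin k, blockSet f C hkw i ⊆ C := by
      intro i x hx
      simp only [blockSet, mem_filter, mem_univ, true_and] at hx
      obtain ⟨y, hy⟩ := hx
      rw [hf x, hy]
      exact blockPos_lt _ _ _
    have hdisj : ∀ i j : Fin k, i ≠ j →
        Disjoint (blockSet f C hkw i) (blockSet f C hkw j) := by
      intro i j hij
      rw [Finset.disjoint_left]
      intro x hx hx'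
      simp only [blockSet, mem_filter, mem_univ, true_and] at hx hx'
      obtain ⟨y, hy⟩ := hx
      obtain ⟨y', hy'⟩ := hx'
      have := (blockPos C.card_le_univ hkw).injective (hy.symm.trans hy')
      exact hij (Prod.ext_iff.1 this).1
    obtain ⟨i₀, hi₀⟩ : ∃ i₀ : Fin k, ∀ i ≠ i₀, #(downIn V C (blockSet f C hkw i)) ≤ d := by
      by_cases h : ∃ i₀ : Fin k, ¬ #(downIn V C (blockSet f C hkw i₀)) ≤ d
      · obtain ⟨i₀, h₀⟩ := h
        exact ⟨i₀, fun i hi =>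
          (hlight _ _ (hsub i) (hsub i₀) (hdisj i i₀ hi)).resolve_right h₀⟩
      · push Not at h
        exact ⟨0, fun i _ => h i⟩
    have hsplit : #{p : Fin k × Fin w | Hits V (f.trans (rot p).symm) #C w} =
        ∑ i : Fin k, #{r : Fin w | Hits V (f.trans (rot (i, r)).symm) #C w} := by
      simp only [card_filter]
      rw [Fintype.sum_prod_type]
    rw [hsplit]
    calc ∑ i : Fin k, #{r : Fin w | Hits V (f.trans (rot (i, r)).symm) #C w}
        ≤ ∑ i : Fin k, ((if i = i₀ then w else 0) + d) := by
          refine sum_le_sum fun i _ => ?_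
          by_cases hi : i = i₀
          · rw [if_pos hi]
            exact le_add_right ((card_filter_le _ _).trans (by simp))
          · rw [if_neg hi, zero_add]
            exact (card_rot_hits_le V hkw hf i).trans (hi₀ i hi)
      _ = w + k * d := by simp [sum_add_distrib]
  calc k * w * #{f ∈ prefixed C | Hits V f #C w}
      = ∑ p : Fin k × Fin w, #{f ∈ prefixed C | Hits V (f.trans (rot p).symm) #C w} := by
        rw [← sum_congr rfl fun p _ => hsame p]; simp
    _ = ∑ f ∈ prefixed C, #{p : Fin k × Fin w | Hits V (f.trans (rot p).symm) #C w} := by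
        simp only [card_filter]; rw [sum_comm]
    _ ≤ ∑ f ∈ prefixed C, (w + k * d) := sum_le_sum hone
    _ = (w + k * d) * #(prefixed C) := by simp [mul_comm]

open Classical in
/-- Every numbering has a lowest initial segment in `V`, so it is counted at most once on the
left. -/
lemma sum_card_not_hits_le {w : ℕ} (V : Finset (Finset X))
    (hV : ∀ A ∈ V, ∀ B ∈ V, #B < #A + w) :
    ∑ C ∈ V, #{f ∈ prefixed C | ¬ Hits V f #C w} ≤ (Fintype.card X).factorial := by
  have aux : ∀ C ∈ V, ∀ C' ∈ V, ∀ f : Numbering X, IsPrefix f C → IsPrefix f C' →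
      ¬ Hits V f #C' w → #C' ≤ #C := by
    intro C hC C' hC' f h h' hn
    by_contra! hlt
    refine hn ⟨#C' - #C, by omega, by have := hV C hC C' hC'; omega, ?_⟩
    rw [Nat.sub_sub_self hlt.le, firstElems_card_of_isPrefix h]
    exact hC
  rw [← card_biUnion]
  · refine (card_le_univ _).trans ?_
    simp
  · intro C hC C' hC' hne
    rw [Function.onFun, Finset.disjoint_left]
    intro f hf hf'
    simp only [mem_filter, mem_prefixed] at hf hf'
    refine hne ?_
    have : #C = #C' := le_antisymm (aux C' hC' C hC f hf'.1 hf.1 hf.2)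
      (aux C hC C' hC' f hf.1 hf'.1 hf'.2)
    rw [← firstElems_card_of_isPrefix hf.1, ← firstElems_card_of_isPrefix hf'.1, this]

/-- Approximate Sperner theorem: a family in which no set has two disjoint heavy directions below
it is hardly larger than the middle layer. -/
lemma card_le_of_light {k w : ℕ} (hk : 0 < k) (hw : 0 < w) (V : Finset (Finset X))
    (hV : ∀ A ∈ V, ∀ B ∈ V, #B < #A + w) (hkw : ∀ C ∈ V, k * w ≤ #C)
    (hlight : ∀ C ∈ V, ∀ W W', W ⊆ C → W' ⊆ C → Disjoint W W' →
      #(downIn V C W) ≤ w / k ∨ #(downIn V C W') ≤ w / k) :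
    (k - 2) * #V ≤ k * (Fintype.card X).choose (Fintype.card X / 2) := by
  classical
  set N := Fintype.card X
  have hterm : ∀ C ∈ V,
      (k - 2) * N.factorial ≤ k * #{f ∈ prefixed C | ¬ Hits V f #C w} * N.choose (N / 2) := by
    intro C hC
    have h1 := card_hits_le hk hw V (hkw C hC) (hlight C hC)
    have h2 := card_filter_add_card_filter_not (s := prefixed C) (fun f => Hits V f #C w)
    have h3 : k * (w / k) ≤ w := Nat.mul_div_le w k
    have h4 : k * #{f ∈ prefixed C | Hits V f #C w} ≤ 2 * #(prefixed C) := by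
      refine Nat.le_of_mul_le_mul_left ?_ hw
      calc w * (k * #{f ∈ prefixed C | Hits V f #C w})
          = k * w * #{f ∈ prefixed C | Hits V f #C w} := by ring
        _ ≤ (w + k * (w / k)) * #(prefixed C) := h1
        _ ≤ (w + w) * #(prefixed C) := by gcongr
        _ = w * (2 * #(prefixed C)) := by ring
    have h5 : (k - 2) * #(prefixed C) ≤ k * #{f ∈ prefixed C | ¬ Hits V f #C w} := by
      rw [Nat.sub_mul, tsub_le_iff_right]
      calc k * #(prefixed C) = k * #{f ∈ prefixed C | ¬ Hits V f #C w} +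
            k * #{f ∈ prefixed C | Hits V f #C w} := by rw [← h2]; ring
        _ ≤ _ := by gcongr
    have h6 : N.factorial ≤ #(prefixed C) * N.choose (N / 2) := by
      rw [card_prefixed, ← Nat.choose_mul_factorial_mul_factorial C.card_le_univ, mul_assoc,
        mul_comm]
      gcongr
      exact Nat.choose_le_middle _ _
    calc (k - 2) * N.factorial ≤ (k - 2) * (#(prefixed C) * N.choose (N / 2)) := by gcongr
      _ = ((k - 2) * #(prefixed C)) * N.choose (N / 2) := by ring
      _ ≤ _ := by gcongr
  refine Nat.le_of_mul_le_mul_left ?_ N.factorial_pos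
  calc N.factorial * ((k - 2) * #V) = ∑ C ∈ V, (k - 2) * N.factorial := by simp; ring
    _ ≤ ∑ C ∈ V, k * #{f ∈ prefixed C | ¬ Hits V f #C w} * N.choose (N / 2) := sum_le_sum hterm
    _ = k * (∑ C ∈ V, #{f ∈ prefixed C | ¬ Hits V f #C w}) * N.choose (N / 2) := by
        rw [mul_sum, sum_mul]
    _ ≤ k * N.factorial * N.choose (N / 2) := by
        gcongr; exact sum_card_not_hits_le V hV
    _ = _ := by ring

end Chains

/-! ### The branching recursion -/

section Recursion

open Classical in
/-- The number of union-free subfamilies of `V`. -/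
noncomputable def countUF {n : ℕ} (V : Finset (Finset (Fin n))) : ℕ :=
  #{F ∈ V.powerset | UnionFree F}

lemma UnionFree.mono {n : ℕ} {F G : Finset (Finset (Fin n))} (hG : UnionFree G) (h : F ⊆ G) :
    UnionFree F :=
  fun A hA B hB C hC => hG A (h hA) B (h hB) C (h hC)

lemma countUF_le_two_pow {n : ℕ} (V : Finset (Finset (Fin n))) : countUF V ≤ 2 ^ #V := by
  classical
  exact (card_filter_le _ _).trans (card_powerset V).le

lemma alphaUF_eq_countUF (n : ℕ) : alphaUF n = countUF (univ : Finset (Finset (Fin n))) := by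
  classical
  rw [alphaUF, Nat.card_eq_fintype_card, Fintype.card_subtype, countUF, powerset_univ]

/-- Branching on whether `C` belongs to the family, and if so on which of `D`, `D'` it avoids. -/
lemma countUF_branch {n : ℕ} {V D D' : Finset (Finset (Fin n))} {C : Finset (Fin n)}
    (h : ∀ F, UnionFree F → C ∈ F → Disjoint F D ∨ Disjoint F D') :
    countUF V ≤ countUF (V.erase C) + countUF ((V \ D).erase C) +
      countUF ((V \ D').erase C) := by
  classical
  have hE : ∀ E : Finset (Finset (Fin n)),
      #{F ∈ V.powerset | UnionFree F ∧ C ∈ F ∧ Disjoint F E} ≤ countUF ((V \ E).erase C) := by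
    intro E
    refine card_le_card_of_injOn (fun F => F.erase C) ?_ ?_
    · intro F hF
      simp only [coe_filter, mem_powerset, Set.mem_ofPred_eq] at hF ⊢
      obtain ⟨hFV, hF, hC, hd⟩ := hF
      exact ⟨erase_subset_erase _ (subset_sdiff.2 ⟨hFV, hd⟩), hF.mono (erase_subset _ _)⟩
    · intro F hF F' hF' hEq
      simp only [coe_filter, mem_powerset, Set.mem_ofPred_eq] at hF hF' hEq
      rw [← insert_erase hF.2.2.1, ← insert_erase hF'.2.2.1, hEq]
  refine le_trans ?_ (Nat.add_le_add (Nat.add_le_add_left (hE D) _) (hE D'))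
  rw [countUF, countUF]
  refine le_trans (card_le_card ?_) ((card_union_le _ _).trans
    (Nat.add_le_add_right (card_union_le _ _) _))
  intro F hF
  simp only [mem_filter, mem_powerset, mem_union] at hF ⊢
  by_cases hC : C ∈ F
  · rcases h F hF.2 hC with hd | hd
    · exact Or.inl (Or.inr ⟨hF.1, hF.2, hC, hd⟩)
    · exact Or.inr ⟨hF.1, hF.2, hC, hd⟩
  · exact Or.inl (Or.inl ⟨subset_erase.2 ⟨hF.1, hC⟩, hF.2⟩)

/-- The container-type count: if every `V` with more than `M` members admits a branching step
that discards at least `d` sets, there are at most `2 ^ M * (1 + x) ^ #V` union-free subfamilies,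
where `x` satisfies `1 + 2 (1 + x)⁻ᵈ ≤ 1 + x`. -/
lemma countUF_le {n M d : ℕ} {x : ℝ} (hx : 0 < x) (hd : 2 ≤ x * (1 + x) ^ d)
    (hstep : ∀ V : Finset (Finset (Fin n)), M < #V → ∃ C ∈ V, ∃ D ⊆ V, ∃ D' ⊆ V,
      C ∉ D ∧ C ∉ D' ∧ d ≤ #D ∧ d ≤ #D' ∧
      ∀ F, UnionFree F → C ∈ F → Disjoint F D ∨ Disjoint F D')
    (V : Finset (Finset (Fin n))) : (countUF V : ℝ) ≤ 2 ^ M * (1 + x) ^ #V := by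
  induction hv : #V using Nat.strong_induction_on generalizing V with
  | _ v ih =>
  subst hv
  have h1x : (1 : ℝ) ≤ 1 + x := by linarith
  rcases le_or_gt #V M with hM | hM
  · calc (countUF V : ℝ) ≤ 2 ^ #V := by exact_mod_cast countUF_le_two_pow V
      _ ≤ 2 ^ M := pow_le_pow_right₀ (by norm_num) hM
      _ ≤ 2 ^ M * (1 + x) ^ #V := le_mul_of_one_le_right (by positivity) (one_le_pow₀ h1x)
  obtain ⟨C, hC, D, hDV, D', hDV', hCD, hCD', hdD, hdD', h⟩ := hstep V hM
  have hpos : 0 < #V := card_pos.2 ⟨C, hC⟩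
  have hcard : ∀ E ⊆ V, C ∉ E → d ≤ #E → #((V \ E).erase C) + 1 + d ≤ #V := by
    intro E hE hCE hdE
    rw [card_erase_add_one (mem_sdiff.2 ⟨hC, hCE⟩), card_sdiff_of_subset hE]
    have := card_le_card hE
    omega
  have hbr : ∀ E ⊆ V, C ∉ E → d ≤ #E →
      (1 + x) ^ d * (countUF ((V \ E).erase C) : ℝ) ≤ 2 ^ M * (1 + x) ^ (#V - 1) := by
    intro E hE hCE hdE
    have hc := hcard E hE hCE hdE
    calc (1 + x) ^ d * (countUF ((V \ E).erase C) : ℝ)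
        ≤ (1 + x) ^ d * (2 ^ M * (1 + x) ^ #((V \ E).erase C)) := by
          gcongr; exact ih _ (by omega) _ rfl
      _ = 2 ^ M * (1 + x) ^ (d + #((V \ E).erase C)) := by rw [pow_add]; ring
      _ ≤ 2 ^ M * (1 + x) ^ (#V - 1) := by
          have : d + #((V \ E).erase C) ≤ #V - 1 := by omega
          gcongr
  have h0 : (countUF (V.erase C) : ℝ) ≤ 2 ^ M * (1 + x) ^ (#V - 1) := by
    rw [← card_erase_of_mem hC]
    exact ih _ (card_erase_lt_of_mem hC) _ rfl
  have hD := hbr D hDV hCD hdD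
  have hD' := hbr D' hDV' hCD' hdD'
  have hb : (countUF V : ℝ) ≤ countUF (V.erase C) + countUF ((V \ D).erase C) +
      countUF ((V \ D').erase C) := by exact_mod_cast countUF_branch h
  set a : ℝ := (countUF ((V \ D).erase C) : ℝ)
  set b : ℝ := (countUF ((V \ D').erase C) : ℝ)
  set T : ℝ := 2 ^ M * (1 + x) ^ (#V - 1)
  have hab : a + b ≤ x * T := by
    have h2 : 2 * (a + b) ≤ x * (1 + x) ^ d * (a + b) := by gcongr
    have h3 : x * ((1 + x) ^ d * a + (1 + x) ^ d * b) ≤ x * (T + T) := by gcongr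
    nlinarith
  calc (countUF V : ℝ) ≤ T + x * T := by linarith
    _ = 2 ^ M * (1 + x) ^ (#V - 1 + 1) := by simp only [T]; ring
    _ = 2 ^ M * (1 + x) ^ #V := by rw [Nat.sub_add_cancel hpos]

/-- A member `C` of a union-free family cannot be the union of a member obtained by deleting
elements of `W` and one obtained by deleting elements of `W'`, when `W` and `W'` are disjoint. -/
lemma UnionFree.disjoint_downIn {n : ℕ} {F V : Finset (Finset (Fin n))} (hF : UnionFree F)
    {C W W' : Finset (Fin n)} (hC : C ∈ F) (hW : Disjoint W W') :
    Disjoint F (downIn V C W) ∨ Disjoint F (downIn V C W') := by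
  by_contra! h
  obtain ⟨h1, h2⟩ := h
  rw [Finset.not_disjoint_iff] at h1 h2
  obtain ⟨A, hA, hA'⟩ := h1
  obtain ⟨B, hB, hB'⟩ := h2
  simp only [downIn, mem_filter] at hA' hB'
  obtain ⟨-, hAC, hAne, hAW⟩ := hA'
  obtain ⟨-, hBC, hBne, hBW⟩ := hB'
  have hun : A ∪ B = C := by
    refine subset_antisymm (union_subset hAC hBC) fun x hx => ?_
    rw [mem_union]
    by_contra! hn
    exact Finset.disjoint_left.1 hW (hAW (mem_sdiff.2 ⟨hx, hn.1⟩))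
      (hBW (mem_sdiff.2 ⟨hx, hn.2⟩))
  refine hF A hA B hB C hC ?_ hAne hBne hun
  rintro rfl
  exact hAne (by simpa using hun)

end Recursion

/-! ### Supersaturation and binomial estimates -/

section Supersaturation

/-- The members of `V` whose size is within `w / 2` of `n / 2`. -/
def midPart {n : ℕ} (w : ℕ) (V : Finset (Finset (Fin n))) : Finset (Finset (Fin n)) :=
  {A ∈ V | 2 * #A < n + w ∧ n < 2 * #A + w}

/-- Supersaturation: a family with noticeably more than a middle layer's worth of medium-sized sets
contains a set with two disjoint heavy directions below it. -/
lemma exists_heavy {n k w : ℕ} (hk : 0 < k) (hw : 0 < w) (hkw : 4 * k * w ≤ n)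
    (V : Finset (Finset (Fin n))) (hV : k * n.choose (n / 2) < (k - 2) * #(midPart w V)) :
    ∃ C ∈ V, ∃ W W', Disjoint W W' ∧ w / k + 1 ≤ #(downIn V C W) ∧
      w / k + 1 ≤ #(downIn V C W') := by
  by_contra! hcon
  refine absurd (card_le_of_light hk hw (midPart w V) ?_ ?_ ?_) (by simpa using hV)
  · intro A hA B hB
    simp only [midPart, mem_filter] at hA hB
    omega
  · intro C hC
    simp only [midPart, mem_filter] at hC
    have : w ≤ k * w := Nat.le_mul_of_pos_left w hk
    have : 4 * k * w = 4 * (k * w) := by ring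
    omega
  · intro C hC W W' _ _ hd
    have hsub : ∀ U, #(downIn (midPart w V) C U) ≤ #(downIn V C U) := fun U =>
      card_le_card (filter_subset_filter _ (filter_subset _ _))
    by_contra! hn
    have h1 := hsub W
    have h2 := hsub W'
    have := hcon C (mem_of_mem_filter C hC) W W' hd (by omega)
    omega

lemma sum_sq_card {α : Type*} [DecidableEq α] (s : Finset α) :
    ∑ A ∈ s.powerset, (2 * (#A : ℤ) - (#s : ℤ)) ^ 2 = (#s : ℤ) * 2 ^ #s := by
  induction s using Finset.induction_on with
  | empty => simp
  | insert a s ha ih =>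
    rw [sum_powerset_insert ha, card_insert_of_notMem ha, ← sum_add_distrib]
    have : ∀ A ∈ s.powerset, (2 * (#A : ℤ) - ((#s + 1 : ℕ) : ℤ)) ^ 2 +
        (2 * (#(insert a A) : ℤ) - ((#s + 1 : ℕ) : ℤ)) ^ 2 =
        2 * (2 * (#A : ℤ) - (#s : ℤ)) ^ 2 + 2 := by
      intro A hA
      rw [card_insert_of_notMem fun h => ha (mem_powerset.1 hA h)]
      push_cast
      ring
    rw [sum_congr rfl this, sum_add_distrib, ← mul_sum, ih]
    simp only [sum_const, card_powerset, nsmul_eq_mul]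
    push_cast
    ring

/-- Chebyshev's inequality for the sizes of the subsets of `[n]`. -/
lemma card_not_mid_le {n : ℕ} (w : ℕ) (V : Finset (Finset (Fin n))) :
    w ^ 2 * (#V - #(midPart w V)) ≤ n * 2 ^ n := by
  have h := sum_sq_card (univ : Finset (Fin n))
  simp only [powerset_univ, card_univ, Fintype.card_fin] at h
  rw [midPart, ← card_filter_add_card_filter_not (s := V)
    (fun A => 2 * #A < n + w ∧ n < 2 * #A + w), Nat.add_sub_cancel_left]
  set S := V.filter fun A => ¬ (2 * #A < n + w ∧ n < 2 * #A + w) with hS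
  suffices hmain : (w : ℤ) ^ 2 * #S ≤ n * 2 ^ n by exact_mod_cast hmain
  rw [← h]
  calc (w : ℤ) ^ 2 * #S = ∑ A ∈ S, (w : ℤ) ^ 2 := by simp [mul_comm]
    _ ≤ ∑ A ∈ S, (2 * (#A : ℤ) - n) ^ 2 := by
        refine sum_le_sum fun A hA => ?_
        rw [hS, mem_filter] at hA
        have h2 := hA.2
        rw [not_and_or, not_lt, not_lt] at h2
        rw [sq_le_sq, Nat.abs_cast]
        rcases h2 with h2 | h2
        · exact le_abs.2 (Or.inl (by omega))
        · exact le_abs.2 (Or.inr (by omega))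
    _ ≤ _ := sum_le_sum_of_subset_of_nonneg (subset_univ _) fun _ _ _ => sq_nonneg _

lemma sixteen_pow_le (k : ℕ) (hk : 1 ≤ k) : 16 ^ k ≤ 4 * k * k.centralBinom ^ 2 := by
  induction k, hk using Nat.le_induction with
  | base => decide
  | succ k hk ih =>
    have h := Nat.succ_mul_centralBinom_succ k
    refine Nat.le_of_mul_le_mul_left ?_ (Nat.succ_pos k)
    calc (k + 1) * 16 ^ (k + 1) = 16 * (k + 1) * 16 ^ k := by ring
      _ ≤ 16 * (k + 1) * (4 * k * k.centralBinom ^ 2) := by gcongr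
      _ = 16 * (4 * k * (k + 1)) * k.centralBinom ^ 2 := by ring
      _ ≤ 16 * (2 * k + 1) ^ 2 * k.centralBinom ^ 2 := by
          gcongr; nlinarith
      _ = 4 * (2 * (2 * k + 1) * k.centralBinom) ^ 2 := by ring
      _ = 4 * ((k + 1) * (k + 1).centralBinom) ^ 2 := by rw [h]
      _ = _ := by rw [Nat.succ_eq_add_one]; ring

/-- The middle binomial coefficient is of order at least `2 ^ n / √n`. -/
lemma four_pow_le_middle (n : ℕ) (hn : 1 ≤ n) : 4 ^ n ≤ 4 * n * n.choose (n / 2) ^ 2 := by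
  obtain ⟨k, rfl | rfl⟩ := Nat.even_or_odd' n
  · have h := sixteen_pow_le k (by omega)
    rw [Nat.mul_div_cancel_left k two_pos, ← Nat.centralBinom_eq_two_mul_choose, pow_mul]
    calc (4 ^ 2) ^ k = 16 ^ k := by norm_num
      _ ≤ _ := h
      _ ≤ _ := by gcongr; omega
  · have h := sixteen_pow_le (k + 1) (by omega)
    have h2 : (k + 1).centralBinom = 2 * (2 * k + 1).choose k := by
      rw [Nat.centralBinom_eq_two_mul_choose, show 2 * (k + 1) = (2 * k + 1) + 1 by ring,
        Nat.choose_succ_succ, Nat.choose_symm_half]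
      ring
    rw [h2] at h
    have h3 : (2 * k + 1) / 2 = k := by omega
    rw [h3]
    have h4 : (16 : ℕ) ^ (k + 1) = 4 * 4 ^ (2 * k + 1) := by
      rw [pow_succ 4 (2 * k), pow_mul, pow_succ]; norm_num; ring
    nlinarith [Nat.zero_le (k * (2 * k + 1).choose k ^ 2)]

end Supersaturation

/-! ### Asymptotics -/

section Asymptotics

lemma two_pow_le_alphaUF (n : ℕ) : 2 ^ n.choose (n / 2) ≤ alphaUF n := by
  classical
  rw [alphaUF_eq_countUF, countUF]
  have hc : #(powersetCard (n / 2) (univ : Finset (Fin n))) = n.choose (n / 2) := by simp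
  rw [← hc, ← card_powerset]
  refine card_le_card fun F hF => ?_
  rw [mem_powerset] at hF
  simp only [powerset_univ, mem_filter, mem_univ, true_and]
  intro A hA B hB C hC _ hAC _ h
  have h1 := (mem_powersetCard.1 (hF hA)).2
  have h2 := (mem_powersetCard.1 (hF hC)).2
  exact hAC (eq_of_subset_of_card_le (h ▸ subset_union_left) (by omega))

lemma exp_half_le {x : ℝ} (h0 : 0 ≤ x) (h1 : x ≤ 1) : Real.exp (x / 2) ≤ 1 + x := by
  have h := Real.add_one_le_exp (-(x / 2))
  have h2 : Real.exp (x / 2) * Real.exp (-(x / 2)) = 1 := by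
    rw [← Real.exp_add, add_neg_cancel, Real.exp_zero]
  have h3 := Real.exp_pos (x / 2)
  have h4 : Real.exp (x / 2) * (1 - x / 2) ≤ 1 := by
    rw [← h2]; gcongr; linarith
  nlinarith

/-- The upper bound on `α(n)` once `√n` is large in terms of `k` and `ε`. -/
lemma alphaUF_le_of_large {ε : ℝ} (hε : 0 < ε) {k n : ℕ} (hk : 2 + 8 / ε ≤ k) (hn : 8 * k ≤ n)
    (ht1 : 512 * (k : ℝ) ^ 2 / ε ≤ √n) (ht2 : ε / 8 ≤ √n)
    (ht3 : 1024 * (k : ℝ) ^ 4 / (ε / 8) ^ 3 ≤ √n) :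
    (alphaUF n : ℝ) ≤ (2 : ℝ) ^ ((1 + ε) * (n.choose (n / 2) : ℝ)) := by
  set N : ℝ := (n.choose (n / 2) : ℝ) with hN
  set t : ℝ := √n with ht
  set δ : ℝ := ε / 8 with hδ
  have hδ0 : 0 < δ := by positivity
  have hk2 : (2 : ℝ) < k := by
    have : 0 < 8 / ε := by positivity
    linarith
  have hk2' : 2 < k := by exact_mod_cast hk2
  have hn1 : 1 ≤ n := by omega
  have hnR : (0 : ℝ) < n := by exact_mod_cast hn1
  have ht0 : 0 < t := Real.sqrt_pos.2 hnR
  have htt : t ^ 2 = n := Real.sq_sqrt hnR.le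
  have hN0 : 0 ≤ N := Nat.cast_nonneg _
  have h2n : (2 : ℝ) ^ n ≤ 2 * t * N := by
    have h : ((4 ^ n : ℕ) : ℝ) ≤ ((4 * n * n.choose (n / 2) ^ 2 : ℕ) : ℝ) :=
      Nat.cast_le.2 (four_pow_le_middle n hn1)
    push_cast at h
    rw [← hN, ← htt] at h
    refine (sq_le_sq₀ (by positivity) (by positivity)).1 ?_
    calc ((2 : ℝ) ^ n) ^ 2 = 4 ^ n := by rw [← pow_mul, mul_comm, pow_mul]; norm_num
      _ ≤ _ := h
      _ = _ := by ring
  set w : ℕ := n / (4 * k) with hw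
  have hwn : 4 * k * w ≤ n := Nat.mul_div_le n (4 * k)
  have hw0 : 0 < w := Nat.div_pos (by omega) (by omega)
  have hwR : (n : ℝ) ≤ 8 * k * w := by
    have h : n < 4 * k * (w + 1) := Nat.lt_mul_div_succ n (by omega)
    have h' : k ≤ k * w := Nat.le_mul_of_pos_right k hw0
    have : n ≤ 8 * k * w := by nlinarith
    exact_mod_cast this
  set d : ℕ := w / k + 1 with hd
  have hdR : (n : ℝ) ≤ 8 * k ^ 2 * d := by
    have h : w < k * d := Nat.lt_mul_div_succ w (by omega)
    have h' : (w : ℝ) ≤ k * d := by exact_mod_cast h.le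
    calc (n : ℝ) ≤ 8 * k * w := hwR
      _ ≤ 8 * k * (k * d) := by gcongr
      _ = _ := by ring
  set x : ℝ := δ / t with hx
  have hx0 : 0 < x := by positivity
  have hx1 : x ≤ 1 := (div_le_one ht0).2 ht2
  have hxd : δ * t / (8 * k ^ 2) ≤ x * d := by
    have hxd' : x * d * (8 * k ^ 2) = δ * (8 * k ^ 2 * d) / t := by rw [hx]; ring
    rw [div_le_iff₀ (by positivity), hxd', le_div_iff₀ ht0]
    calc δ * t * t = δ * n := by rw [← htt]; ring
      _ ≤ δ * (8 * k ^ 2 * d) := by gcongr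
  -- `(1 + x) ^ d` is exponentially large in `√n`; a quadratic lower bound suffices
  have hpow : 2 ≤ x * (1 + x) ^ d := by
    have h1 : (δ * t / (8 * k ^ 2) / 2) ^ 2 / 2 ≤ (1 + x) ^ d := by
      calc (δ * t / (8 * k ^ 2) / 2) ^ 2 / 2 ≤ (x * d / 2) ^ 2 / 2 := by gcongr
        _ ≤ Real.exp (x * d / 2) := by
            have := Real.quadratic_le_exp_of_nonneg (x := x * d / 2) (by positivity)
            have h' : 0 ≤ x * d / 2 := by positivity
            linarith
        _ = Real.exp (x / 2) ^ d := by rw [← Real.exp_nat_mul]; ring_nf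
        _ ≤ (1 + x) ^ d := by gcongr; exact exp_half_le hx0.le hx1
    calc (2 : ℝ) ≤ x * ((δ * t / (8 * k ^ 2) / 2) ^ 2 / 2) := by
          have : x * ((δ * t / (8 * k ^ 2) / 2) ^ 2 / 2) = t * δ ^ 3 / (512 * k ^ 4) := by
            rw [hx]; field_simp; norm_num
          rw [this, le_div_iff₀ (by positivity)]
          rw [div_le_iff₀ (by positivity)] at ht3
          linarith
      _ ≤ _ := by gcongr
  set M : ℕ := ⌊(1 + ε / 2) * N⌋₊ with hM
  have hMle : (M : ℝ) ≤ (1 + ε / 2) * N := Nat.floor_le (by positivity)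
  have hstep : ∀ V : Finset (Finset (Fin n)), M < #V → ∃ C ∈ V, ∃ D ⊆ V, ∃ D' ⊆ V,
      C ∉ D ∧ C ∉ D' ∧ d ≤ #D ∧ d ≤ #D' ∧
      ∀ F, UnionFree F → C ∈ F → Disjoint F D ∨ Disjoint F D' := by
    intro V hV
    have hVR : (1 + ε / 2) * N < #V := (Nat.floor_lt (by positivity)).1 hV
    have htail : (#V : ℝ) - #(midPart w V) ≤ ε / 4 * N := by
      have h := card_not_mid_le w V
      have hle : #(midPart w V) ≤ #V := card_le_card (filter_subset _ _)
      have h' : ((w ^ 2 * (#V - #(midPart w V)) : ℕ) : ℝ) ≤ ((n * 2 ^ n : ℕ) : ℝ) :=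
        Nat.cast_le.2 h
      push_cast [Nat.cast_sub hle] at h'
      have hq : (0 : ℝ) ≤ (#V : ℝ) - #(midPart w V) := by
        rw [sub_nonneg]; exact_mod_cast hle
      set q : ℝ := (#V : ℝ) - #(midPart w V)
      have h1 : (n : ℝ) * (n * q) ≤ n * (128 * k ^ 2 * t * N) := by
        calc (n : ℝ) * (n * q) = (n : ℝ) ^ 2 * q := by ring
          _ ≤ (8 * k * w) ^ 2 * q := by gcongr
          _ = 64 * k ^ 2 * (w ^ 2 * q) := by ring
          _ ≤ 64 * k ^ 2 * (n * (2 * t * N)) := by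
              have h'' : (w : ℝ) ^ 2 * q ≤ n * (2 * t * N) := h'.trans (by gcongr)
              gcongr
          _ = n * (128 * k ^ 2 * t * N) := by ring
      have h2 : t * (t * q) ≤ t * (128 * k ^ 2 * N) := by
        have := le_of_mul_le_mul_left h1 hnR
        rw [← htt] at this
        linarith
      have h3 := le_of_mul_le_mul_left h2 ht0
      have h4 : 128 * (k : ℝ) ^ 2 * N ≤ t * (ε / 4 * N) := by
        rw [div_le_iff₀ hε] at ht1
        nlinarith
      exact le_of_mul_le_mul_left (h3.trans h4) ht0
    have hmid : k * n.choose (n / 2) < (k - 2) * #(midPart w V) := by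
      have h1 : (1 + ε / 4) * N < #(midPart w V) := by linarith
      have h2 : (k : ℝ) ≤ (k - 2) * (1 + ε / 4) := by
        have : 8 ≤ (k - 2) * ε := by
          rw [← div_le_iff₀ hε]; linarith
        linarith
      have h3 : (k : ℝ) * N < (k - 2) * #(midPart w V) := by
        calc (k : ℝ) * N ≤ (k - 2) * (1 + ε / 4) * N := by gcongr
          _ = (k - 2) * ((1 + ε / 4) * N) := by ring
          _ < _ := by
            have : (0 : ℝ) < k - 2 := by linarith
            gcongr
      have h4 : ((k * n.choose (n / 2) : ℕ) : ℝ) < (((k - 2) * #(midPart w V) : ℕ) : ℝ) := by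
        push_cast [Nat.cast_sub hk2'.le]
        exact h3
      exact_mod_cast h4
    obtain ⟨C, hC, W, W', hWW, h1, h2⟩ := exists_heavy (by omega) hw0 hwn V hmid
    have hnot : ∀ U, C ∉ downIn V C U := fun U h => by simp [downIn] at h
    exact ⟨C, hC, _, filter_subset _ _, _, filter_subset _ _, hnot W, hnot W', h1, h2,
      fun F hF hCF => hF.disjoint_downIn hCF hWW⟩
  have hcount := countUF_le hx0 hpow hstep univ
  rw [← alphaUF_eq_countUF, card_univ, Fintype.card_finset, Fintype.card_fin] at hcount
  -- the factor contributed by the branching steps is negligible, as `2 ^ n * x ≤ 2 * δ * N`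
  have hfp : (1 + x) ^ (2 ^ n) ≤ (2 : ℝ) ^ (ε / 2 * N) := by
    have hlog : (1 / 2 : ℝ) ≤ Real.log 2 := by linarith [Real.log_two_gt_d9]
    rw [Real.rpow_def_of_pos two_pos]
    calc (1 + x) ^ (2 ^ n) ≤ Real.exp x ^ (2 ^ n) := by
          gcongr; linarith [Real.add_one_le_exp x]
      _ = Real.exp (2 ^ n * x) := by rw [← Real.exp_nat_mul]; norm_num
      _ ≤ Real.exp (Real.log 2 * (ε / 2 * N)) := by
          rw [Real.exp_le_exp]
          calc 2 ^ n * x ≤ 2 * t * N * x := by gcongr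
            _ = 1 / 2 * (ε / 2 * N) := by rw [hx, hδ]; field_simp; ring
            _ ≤ _ := by gcongr
  calc (alphaUF n : ℝ) ≤ 2 ^ M * (1 + x) ^ (2 ^ n) := hcount
    _ ≤ (2 : ℝ) ^ ((1 + ε / 2) * N) * (2 : ℝ) ^ (ε / 2 * N) := by
        gcongr
        rw [← Real.rpow_natCast]
        exact Real.rpow_le_rpow_of_exponent_le one_le_two hMle
    _ = (2 : ℝ) ^ ((1 + ε) * N) := by
        rw [← Real.rpow_add two_pos]; ring_nf

end Asymptotics

/-- `α(n) = 2^{(1+o(1))·C(n,⌊n/2⌋)}`: for every `ε > 0` and `n` sufficiently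
large, `2^{C(n,⌊n/2⌋)} ≤ α(n) ≤ 2^{(1+ε)·C(n,⌊n/2⌋)}`. -/
theorem alphaUF_asymptotics (ε : ℝ) (hε : 0 < ε) :
    ∃ n₀ : ℕ, ∀ n ≥ n₀,
      2 ^ (n.choose (n / 2)) ≤ alphaUF n ∧
      (alphaUF n : ℝ) ≤ (2 : ℝ) ^ ((1 + ε) * (n.choose (n / 2) : ℝ)) := by
  obtain ⟨k, hk⟩ := exists_nat_ge (2 + 8 / ε)
  have hlim : Filter.Tendsto (fun n : ℕ => √(n : ℝ)) Filter.atTop Filter.atTop :=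
    Real.tendsto_sqrt_atTop.comp tendsto_natCast_atTop_atTop
  obtain ⟨n₀, h⟩ := Filter.eventually_atTop.1
    (((hlim.eventually_ge_atTop (512 * (k : ℝ) ^ 2 / ε)).and
      (hlim.eventually_ge_atTop (ε / 8))).and
      ((hlim.eventually_ge_atTop (1024 * (k : ℝ) ^ 4 / (ε / 8) ^ 3)).and
        (Filter.eventually_ge_atTop (8 * k))))
  refine ⟨n₀, fun n hn => ⟨two_pow_le_alphaUF n, ?_⟩⟩
  obtain ⟨⟨h1, h2⟩, h3, h4⟩ := h n hn
  exact alphaUF_le_of_large hε hk h4 h1 h2 h3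
end
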